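/- arXiv:0902.1634 — 3 statements merged into one kernel-verified Lean document; each statement's English description precedes it below -/
import Mathlib

section
/- Let q be a prime power and let n ≥ k ≥ 1 be integers. If C ⊆ (F_q)^n is a linear code of dimension k and minimum Hamming distance at least d (with d ≥ 1), then n ≥ Σ_{i=0}^{k−1} ⌈d/q^i⌉ (the Griesmer bound). -/
open Finset in
/-- Double counting of the zeros of `y + a • x` over all scalars `a`. -/
theorem sum_card_filter_add_mul_ne_zero {F ι : Type*} [Field F] [Fintype F] [DecidableEq F]
    (S : Finset ι) (x y : ι → F) :
    ∑ a : F, #{i ∈ S | y i + a * x i ≠ 0} + #{i ∈ S | x i ≠ 0} =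
      Fintype.card F * #{i ∈ S | x i ≠ 0} +
        Fintype.card F * #{i ∈ {j ∈ S | x j = 0} | y i ≠ 0} := by
  simp only [card_filter, sum_filter]
  rw [sum_comm, ← sum_add_distrib, mul_sum, mul_sum, ← sum_add_distrib]
  refine sum_congr rfl fun i _ => ?_
  by_cases hx : x i = 0
  · simp [hx]
  · have hiff : ∀ a : F, y i + a * x i ≠ 0 ↔ a ≠ -y i / x i := fun a => by
      rw [ne_eq, ne_eq, eq_div_iff hx, eq_neg_iff_add_eq_zero, add_comm]
    have hcount : #{a : F | a ≠ -y i / x i} = Fintype.card F - 1 := by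
      rw [filter_ne', card_erase_of_mem (mem_univ _), card_univ]
    have hpos : 0 < Fintype.card F := Fintype.card_pos
    simp only [hiff, ← card_filter, hcount]
    simp only [ne_eq, hx, not_false_eq_true, if_true, if_false, mul_one, mul_zero]
    omega

open Finset in
/-- The Griesmer bound for the code parametrized by a linear map `L` and punctured to the
coordinates in `S`, with a rational lower bound `d` on the weights. -/
theorem sum_ceil_le_card_of_le_weight {F ι : Type*} [Field F] [Fintype F] [DecidableEq F]
    (k : ℕ) {V : Type*} [AddCommGroup V] [Module F V] [FiniteDimensional F V]
    (L : V →ₗ[F] ι → F) (S : Finset ι) (d : ℚ) (hdim : Module.finrank F V = k)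
    (hmin : ∀ v ≠ 0, d ≤ #{i ∈ S | L v i ≠ 0}) :
    ∑ i ∈ range k, ⌈d / (Fintype.card F : ℚ) ^ i⌉₊ ≤ #S := by
  induction k generalizing V S d with
  | zero => simp
  | succ k ih =>
    have : Nontrivial V := Module.nontrivial_of_finrank_pos (R := F) (by omega)
    obtain ⟨c, hc, hcmin⟩ := (measure fun v : V => #{i ∈ S | L v i ≠ 0}).wf.has_min
      {v | v ≠ 0} (exists_ne 0)
    replace hcmin : ∀ v ≠ 0, #{i ∈ S | L c i ≠ 0} ≤ #{i ∈ S | L v i ≠ 0} :=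
      fun v hv => not_lt.1 (hcmin v hv)
    obtain ⟨W, hW⟩ := (F ∙ c).exists_isCompl
    have hWdim : Module.finrank F W = k := by
      have := Submodule.finrank_add_eq_of_isCompl hW
      rw [finrank_span_singleton hc] at this
      omega
    have hweight : ∀ w : W, w ≠ 0 → d / (Fintype.card F : ℚ) ≤
        #{i ∈ {j ∈ S | L c j = 0} | (L ∘ₗ W.subtype) w i ≠ 0} := by
      intro w hw
      have hne : ∀ a : F, (w : V) + a • c ≠ 0 := by
        intro a ha
        refine hw (Subtype.ext (Submodule.disjoint_def.1 hW.disjoint w ?_ w.2))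
        rw [eq_neg_of_add_eq_zero_left ha]
        exact neg_mem (Submodule.smul_mem _ _ (Submodule.mem_span_singleton_self c))
      have hsum : Fintype.card F * #{i ∈ S | L c i ≠ 0} ≤
          ∑ a : F, #{i ∈ S | L w i + a * L c i ≠ 0} := by
        rw [← card_univ, ← smul_eq_mul]
        refine card_nsmul_le_sum _ _ _ fun a _ => ?_
        simpa using hcmin _ (hne a)
      have hcount := sum_card_filter_add_mul_ne_zero S (L c) (L w)
      have hle : #{i ∈ S | L c i ≠ 0} ≤
          Fintype.card F * #{i ∈ {j ∈ S | L c j = 0} | L w i ≠ 0} := by omega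
      rw [div_le_iff₀' (by exact_mod_cast Fintype.card_pos)]
      exact (hmin c hc).trans (by exact_mod_cast hle)
    have hrec := ih (L ∘ₗ W.subtype) _ _ hWdim hweight
    have hd : ⌈d⌉₊ ≤ #{i ∈ S | L c i ≠ 0} := Nat.ceil_le.2 (hmin c hc)
    have hsplit := card_filter_add_card_filter_not (s := S) (fun i => L c i = 0)
    rw [sum_range_succ']
    simp only [div_div, ← pow_succ'] at hrec
    simp only [pow_zero, div_one]
    simp only [ne_eq] at hd
    omega

/-- **Griesmer bound.** Let `q` be a prime power and `n ≥ k ≥ 1`. If `C ⊆ (F_q)^n`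
is a linear code of dimension `k` whose minimum Hamming distance (between distinct
codewords) is at least `d ≥ 1`, then `n ≥ ∑_{i=0}^{k-1} ⌈d / q^i⌉`. -/
theorem griesmer_bound (q n k d : ℕ) (hq : IsPrimePow q)
    (hk : 1 ≤ k) (hkn : k ≤ n) (hd : 1 ≤ d)
    (F : Type) [Field F] [Fintype F] [DecidableEq F] (hcard : Fintype.card F = q)
    (C : Submodule F (Fin n → F))
    (hdim : Module.finrank F C = k)
    (hmin : ∀ c ∈ C, ∀ c' ∈ C, c ≠ c' → d ≤ hammingDist c c') :
    (∑ i ∈ Finset.range k, ⌈(d : ℚ) / (q : ℚ) ^ i⌉₊) ≤ n := by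
  subst hcard
  simpa using sum_ceil_le_card_of_le_weight k C.subtype Finset.univ (d : ℚ) hdim fun v hv => by
    have h := hmin v v.2 0 C.zero_mem (by simpa using hv)
    rw [hammingDist_zero_right] at h
    exact_mod_cast h
end

section
/- Let q be a prime power, and let n, k, d, i be natural numbers with n > k > 2 and d ≥ 2i + 1 ≥ 3. If there exists a systematic (n,k,q) code C ⊆ (F_q)^n with minimum Hamming distance at least d, then C(k,i)·(q−1)^i ≤ Σ_{j=d−i}^{n−k} C(n−k,j)·(q−1)^j, where C(a,b) denotes the binomial coefficient. -/
/-- The number of vectors of Hamming weight `j` in `F ^ ι`. -/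
theorem card_filter_hammingNorm_eq {ι F : Type*} [Fintype ι] [DecidableEq ι] [Zero F] [Fintype F]
    [DecidableEq F] (j : ℕ) :
    (Finset.univ.filter fun x : ι → F => hammingNorm x = j).card =
      (Fintype.card ι).choose j * (Fintype.card F - 1) ^ j := by
  have hfiber (s : Finset ι) :
      (Finset.univ.filter fun x : ι → F => (Finset.univ.filter fun a => x a ≠ 0) = s).card =
        (Fintype.card F - 1) ^ s.card := by
    have hset : (Finset.univ.filter fun x : ι → F => (Finset.univ.filter fun a => x a ≠ 0) = s) =
        Fintype.piFinset fun a => if a ∈ s then Finset.univ.erase (0 : F) else {0} := by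
      ext x
      simp only [Finset.mem_filter, Finset.mem_univ, true_and, Fintype.mem_piFinset,
        Finset.ext_iff]
      refine forall_congr' fun a => ?_
      by_cases ha : a ∈ s <;> simp [ha]
    rw [hset, Fintype.card_piFinset]
    simp [apply_ite Finset.card, Finset.card_erase_of_mem]
  rw [Finset.card_eq_sum_card_fiberwise (f := fun x : ι → F => Finset.univ.filter fun a => x a ≠ 0)
    (t := Finset.univ.powersetCard j)]
  · rw [Finset.sum_congr rfl (g := fun _ => (Fintype.card F - 1) ^ j)]
    · simp
    · intro s hs
      have hs' : s.card = j := (Finset.mem_powersetCard.mp hs).2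
      rw [← hs', ← hfiber s, Finset.filter_filter]
      congr 1
      refine Finset.filter_congr fun x _ => ⟨And.right, fun h => ⟨?_, h⟩⟩
      rw [← h]
      rfl
  · intro x hx
    simpa [hammingNorm, Finset.mem_powersetCard] using hx

/-- The Hamming distance of two vectors splits over an initial and a final block. -/
theorem hammingDist_fin_add {F : Type*} [DecidableEq F] {k m : ℕ} (x y : Fin (k + m) → F) :
    hammingDist x y =
      hammingDist (fun a => x (Fin.castAdd m a)) (fun a => y (Fin.castAdd m a)) +
        hammingDist (fun a => x (Fin.natAdd k a)) (fun a => y (Fin.natAdd k a)) := by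
  simp only [hammingDist, Finset.card_filter, Fin.sum_univ_add]

/-- **Bound A.** Let `q` be a prime power and `n > k > 2`, `d ≥ 2i + 1 ≥ 3`.
If `C ⊆ (F_q)^n` is a systematic `(n,k,q)` code (the projection onto the first
`k` coordinates restricts to a bijection from `C` onto `(F_q)^k`) with minimum
Hamming distance at least `d`, then
`C(k,i)·(q−1)^i ≤ ∑_{j=d−i}^{n−k} C(n−k,j)·(q−1)^j`. -/
theorem bound_A (q n k d i : ℕ) (hq : IsPrimePow q)
    (hkn : k < n) (hk : 2 < k) (hi : 3 ≤ 2 * i + 1) (hd : 2 * i + 1 ≤ d)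
    (F : Type) [Field F] [Fintype F] [DecidableEq F] (hcard : Fintype.card F = q)
    (C : Set (Fin n → F))
    (hsys : Set.BijOn (fun (c : Fin n → F) (j : Fin k) => c (Fin.castLE hkn.le j))
      C Set.univ)
    (hmin : ∀ c ∈ C, ∀ c' ∈ C, c ≠ c' → d ≤ hammingDist c c') :
    Nat.choose k i * (q - 1) ^ i ≤
      ∑ j ∈ Finset.Icc (d - i) (n - k), Nat.choose (n - k) j * (q - 1) ^ j := by
  obtain ⟨m, rfl⟩ := Nat.exists_eq_add_of_le hkn.le
  subst hcard
  rw [Nat.add_sub_cancel_left]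
  choose φ hφC hφ using fun v : Fin k → F => hsys.surjOn (Set.mem_univ v)
  have hhead (v : Fin k → F) : (fun a => φ v (Fin.castAdd m a)) = v := hφ v
  have hdist (v w : Fin k → F) (hvw : v ≠ w) : d ≤ hammingDist v w +
      hammingDist (fun a => φ v (Fin.natAdd k a)) (fun a => φ w (Fin.natAdd k a)) := by
    have hne : φ v ≠ φ w := fun h => hvw (by rw [← hhead v, ← hhead w, h])
    have h := hmin _ (hφC v) _ (hφC w) hne
    rwa [hammingDist_fin_add, hhead, hhead] at h
  let tail (v : Fin k → F) : Fin m → F :=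
    (-fun a => φ v (Fin.natAdd k a)) + fun a => φ 0 (Fin.natAdd k a)
  have hleft := card_filter_hammingNorm_eq (ι := Fin k) (F := F) i
  have hright (j : ℕ) := card_filter_hammingNorm_eq (ι := Fin m) (F := F) j
  simp only [Fintype.card_fin] at hleft hright
  rw [← hleft, ← Finset.sum_congr rfl fun j _ => hright j]
  rw [← Finset.card_biUnion fun a _ b _ hab => Finset.disjoint_filter.mpr
    fun x _ hxa hxb => hab (hxa.symm.trans hxb)]
  refine Finset.card_le_card_of_injOn tail ?_ ?_
  · intro v hv
    have hv' : hammingNorm v = i := by simpa using hv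
    have hne : v ≠ 0 := by
      rintro rfl
      rw [hammingNorm_zero] at hv'
      omega
    have h := hdist v 0 hne
    rw [hammingDist_zero_right, hv', hammingDist_eq_hammingNorm] at h
    have hle : hammingNorm (tail v) ≤ m := by
      simpa using hammingNorm_le_card_fintype (x := tail v)
    simp only [Finset.coe_biUnion, Set.mem_iUnion, Finset.mem_coe, Finset.mem_Icc,
      Finset.mem_filter, Finset.mem_univ, true_and]
    refine ⟨hammingNorm (tail v), ⟨?_, hle⟩, rfl⟩
    change d ≤ i + hammingNorm (tail v) at h
    omega
  · intro v hv w hw hvw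
    have hv' : hammingNorm v = i := by simpa using hv
    have hw' : hammingNorm w = i := by simpa using hw
    by_contra hne
    have h := hdist v w hne
    rw [neg_injective (add_right_cancel hvw), hammingDist_self] at h
    have htri := hammingDist_triangle v 0 w
    rw [hammingDist_zero_right, hammingDist_zero_left, hv', hw'] at htri
    omega
end

section
/- Let q be a prime power, and let n, k, d, i be natural numbers with n > k ≥ 1 and d ≥ 2i + 1 ≥ 3. If there exists a systematic (n,k,q) code C ⊆ (F_q)^n with minimum Hamming distance at least d, then there exists an injective map from the set A = { v ∈ (F_q)^k : w(v) = i } into the set B = { u ∈ (F_q)^{n−k} : w(u) ≥ d − i }. -/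
/-- The Hamming distance splits as the distance between the first `k` coordinates plus the
distance between the remaining `m` coordinates. -/
theorem hammingDist_eq_add_of_eq_add {α : Type*} [DecidableEq α] {n k m : ℕ} (h : k + m = n)
    (x y : Fin n → α) :
    hammingDist x y =
      hammingDist (fun j : Fin k => x (Fin.castLE (h ▸ Nat.le_add_right k m) j))
          (fun j => y (Fin.castLE (h ▸ Nat.le_add_right k m) j)) +
        hammingDist (fun j : Fin m => x (Fin.cast h (Fin.natAdd k j)))
          (fun j => y (Fin.cast h (Fin.natAdd k j))) := by
  subst h
  simp only [hammingDist, Finset.card_filter, Fin.sum_univ_add]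
  rfl

/-- Let `q` be a prime power, `n > k ≥ 1`, `d ≥ 2i + 1 ≥ 3`. If there exists a
systematic `(n,k,q)` code `C ⊆ (F_q)^n` with minimum Hamming distance at least
`d`, then there is an injective map from
`A = { v ∈ (F_q)^k : w(v) = i }` into `B = { u ∈ (F_q)^{n−k} : w(u) ≥ d − i }`. -/
theorem exists_injection_of_systematic (q n k d i : ℕ) (hq : IsPrimePow q)
    (hk : 1 ≤ k) (hkn : k < n) (hi : 3 ≤ 2 * i + 1) (hd : 2 * i + 1 ≤ d)
    (F : Type) [Field F] [Fintype F] [DecidableEq F] (hcard : Fintype.card F = q)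
    (C : Set (Fin n → F))
    (hsys : Set.BijOn (fun (c : Fin n → F) (j : Fin k) => c (Fin.castLE hkn.le j))
      C Set.univ)
    (hmin : ∀ c ∈ C, ∀ c' ∈ C, c ≠ c' → d ≤ hammingDist c c') :
    ∃ f : {v : Fin k → F // hammingNorm v = i} →
        {u : Fin (n - k) → F // d - i ≤ hammingNorm u},
      Function.Injective f := by
  have hnk : k + (n - k) = n := by omega
  choose c hcC hc using fun v : Fin k → F => hsys.surjOn (Set.mem_univ v)
  let tail (x : Fin n → F) (j : Fin (n - k)) : F := x (Fin.cast hnk (Fin.natAdd k j))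
  have hdist (v w : Fin k → F) :
      hammingDist (c v) (c w) = hammingDist v w + hammingDist (tail (c v)) (tail (c w)) := by
    have h := hammingDist_eq_add_of_eq_add hnk (c v) (c w)
    have hv := hc v
    have hw := hc w
    dsimp only at hv hw
    rwa [hv, hw] at h
  have hle {v w : Fin k → F} (hvw : v ≠ w) :
      d ≤ hammingDist v w + hammingDist (tail (c v)) (tail (c w)) := by
    rw [← hdist]
    refine hmin _ (hcC v) _ (hcC w) fun h => hvw ?_
    rw [← hc v, ← hc w, h]
  refine ⟨fun v => ⟨tail (c v.1) - tail (c 0), ?_⟩, ?_⟩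
  · obtain ⟨v, hv⟩ := v
    have hv0 : v ≠ 0 := by
      rintro rfl
      rw [hammingNorm_zero] at hv
      omega
    have h := hle hv0
    rw [hammingDist_zero_right, hv, hammingDist_comm, hammingDist_eq_hammingNorm,
      neg_add_eq_sub] at h
    dsimp only
    omega
  · rintro ⟨v, hv⟩ ⟨w, hw⟩ hvw
    have htail : tail (c v) = tail (c w) := sub_left_injective (congrArg Subtype.val hvw)
    by_contra hne
    have h := hle (v := v) (w := w) fun h => hne (Subtype.ext h)
    have htri := hammingDist_triangle v 0 w
    rw [htail, hammingDist_self] at h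
    rw [hammingDist_zero_right, hammingDist_zero_left, hv, hw] at htri
    omega
end
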